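/- arXiv:1111.2365 — 2 statements merged into one kernel-verified Lean document; each statement's English description precedes it below -/
import Mathlib

section
/- Let d ≥ 3 be an integer, λ ∈ ℂ with λ ≠ 0, and ε > 0, and let U = {z ∈ ℂ : 0 < |z| < ε}. Then the holomorphic vector field X(z) = λ·z^{2−d} = λ/z^{d−2} on U is not semi-complete; more precisely, for every p ∈ U there exists no maximal solution through p: there is no open connected set V ⊆ ℂ with 0 ∈ V together with a holomorphic map φ : V → U satisfying φ(0) = p and φ'(T) = λ·φ(T)^{2−d} for all T ∈ V, such that for every point T̂ in the topological boundary of V and every sequence (T_i) in V converging to T̂, the sequence (φ(T_i)) eventually leaves every compact subset of U. -/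
open Filter

/-- A solution of `dφ/dT = c φ^{-(m+1)}` on a connected open set satisfies
`φ(T)^{m+2} = φ(0)^{m+2} + (m+2) c T`. -/
lemma pow_eq_add_mul_of_hasDerivAt {m : ℕ} {c : ℂ} {V : Set ℂ} {φ : ℂ → ℂ}
    (hV : IsOpen V) (hVc : IsPreconnected V) (h0 : (0 : ℂ) ∈ V) (hne : ∀ T ∈ V, φ T ≠ 0)
    (hφ : ∀ T ∈ V, HasDerivAt φ (c * (φ T ^ (m + 1))⁻¹) T) {T : ℂ} (hT : T ∈ V) :
    φ T ^ (m + 2) = φ 0 ^ (m + 2) + (m + 2) * c * T := by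
  have hderiv : ∀ S ∈ V, HasDerivAt (fun S => φ S ^ (m + 2) - (m + 2) * c * S) 0 S := by
    intro S hS
    have hpow := ((hφ S hS).pow (m + 2)).sub ((hasDerivAt_id S).const_mul ((m + 2) * c))
    refine hpow.congr_deriv ?_
    have := hne S hS
    push_cast
    field_simp
    ring
  have hconst := hV.is_const_of_deriv_eq_zero hVc
    (fun S hS => (hderiv S hS).differentiableAt.differentiableWithinAt)
    (fun S hS => (hderiv S hS).deriv) hT h0
  simp only [mul_zero, sub_zero] at hconst
  linear_combination hconst

/-- The loop of times along which `p^{m+2} + (m+2) c T` runs once around the circle through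
`p^{m+2}`. -/
noncomputable def timeLoop (m : ℕ) (c p : ℂ) (θ : ℝ) : ℂ :=
  p ^ (m + 2) * (Complex.exp (θ * Complex.I) - 1) / ((m + 2) * c)

lemma natCast_add_two_ne_zero (m : ℕ) : (m + 2 : ℂ) ≠ 0 := by
  exact_mod_cast (by omega : m + 2 ≠ 0)

lemma pow_add_mul_timeLoop (m : ℕ) {c : ℂ} (hc : c ≠ 0) (p : ℂ) (θ : ℝ) :
    p ^ (m + 2) + (m + 2) * c * timeLoop m c p θ =
      p ^ (m + 2) * Complex.exp (θ * Complex.I) := by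
  have := natCast_add_two_ne_zero m
  unfold timeLoop
  field_simp
  ring

lemma hasDerivAt_timeLoop (m : ℕ) (c p : ℂ) (θ : ℝ) :
    HasDerivAt (timeLoop m c p)
      (p ^ (m + 2) * (Complex.exp (θ * Complex.I) * Complex.I) / ((m + 2) * c)) θ := by
  have hlin : HasDerivAt (fun t : ℝ => (t : ℂ) * Complex.I) Complex.I θ := by
    simpa using (Complex.ofRealCLM.hasDerivAt (x := θ)).mul_const Complex.I
  exact ((hlin.cexp.sub_const 1).const_mul (p ^ (m + 2))).div_const _

lemma timeLoop_zero (m : ℕ) (c p : ℂ) : timeLoop m c p 0 = 0 := by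
  simp [timeLoop]

lemma timeLoop_two_pi (m : ℕ) (c p : ℂ) : timeLoop m c p (2 * Real.pi) = 0 := by
  simp [timeLoop, Complex.exp_two_pi_mul_I]

/-- Continuing a nowhere vanishing solution along the whole time loop would produce a
single-valued `(m+2)`-nd root on a circle around the origin. -/
lemma not_forall_timeLoop_mem {m : ℕ} {c : ℂ} (hc : c ≠ 0) {V : Set ℂ} {φ : ℂ → ℂ}
    (hne : ∀ T ∈ V, φ T ≠ 0)
    (hφ : ∀ T ∈ V, HasDerivAt φ (c * (φ T ^ (m + 1))⁻¹) T)
    (hpow : ∀ T ∈ V, φ T ^ (m + 2) = φ 0 ^ (m + 2) + (m + 2) * c * T) :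
    ¬ ∀ θ : ℝ, timeLoop m c (φ 0) θ ∈ V := by
  intro hmem
  have hm := natCast_add_two_ne_zero m
  have hg : ∀ θ : ℝ, HasDerivAt (fun θ => φ (timeLoop m c (φ 0) θ))
      (Complex.I / (m + 2) * φ (timeLoop m c (φ 0) θ)) θ := by
    intro θ
    refine ((hφ _ (hmem θ)).comp θ (hasDerivAt_timeLoop m c (φ 0) θ)).congr_deriv ?_
    have hroot := (hpow _ (hmem θ)).trans (pow_add_mul_timeLoop m hc (φ 0) θ)
    have := hne _ (hmem θ)
    rw [← mul_assoc (φ 0 ^ (m + 2)), ← hroot]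
    field_simp
    ring
  have hlin : ∀ θ : ℝ, HasDerivAt (fun t : ℝ => (t : ℂ) * -(Complex.I / (m + 2)))
      (-(Complex.I / (m + 2))) θ := fun θ => by
    simpa using (Complex.ofRealCLM.hasDerivAt (x := θ)).mul_const (-(Complex.I / (m + 2)))
  have hh : ∀ θ : ℝ, HasDerivAt (fun θ : ℝ => φ (timeLoop m c (φ 0) θ) *
      Complex.exp (θ * -(Complex.I / (m + 2)))) 0 θ := fun θ =>
    ((hg θ).mul (hlin θ).cexp).congr_deriv (by ring)
  have hconst := is_const_of_deriv_eq_zero (fun θ => (hh θ).differentiableAt)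
    (fun θ => (hh θ).deriv) (2 * Real.pi) 0
  have h0 : φ 0 ≠ 0 := hne 0 (timeLoop_zero m c (φ 0) ▸ hmem 0)
  simp only [timeLoop_two_pi, timeLoop_zero, Complex.ofReal_zero, zero_mul, Complex.exp_zero]
    at hconst
  obtain ⟨k, hk⟩ := Complex.exp_eq_one_iff.mp (mul_left_cancel₀ h0 hconst)
  have hpi : (2 * Real.pi * Complex.I : ℂ) ≠ 0 := Complex.two_pi_I_ne_zero
  have hk' : (k : ℂ) * (m + 2) = -1 := by
    apply mul_right_cancel₀ hpi
    push_cast at hk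
    field_simp at hk
    linear_combination (-2 * Real.pi * Complex.I) * hk
  have hkZ : k * (m + 2) = -1 := by exact_mod_cast hk'
  have hdvd : ((m : ℤ) + 2) ∣ 1 := ⟨-k, by linarith⟩
  have := Int.le_of_dvd one_pos hdvd
  omega

/-- A solution on `V` that leaves every compact subset of the punctured disc at the frontier
of `V` can be continued along the whole time loop. -/
lemma timeLoop_mem_of_maximal {m : ℕ} {c : ℂ} (hc : c ≠ 0) {ε : ℝ} {V : Set ℂ} {φ : ℂ → ℂ}
    (hV : IsOpen V) (h0 : (0 : ℂ) ∈ V) (hp : 0 < ‖φ 0‖) (hpε : ‖φ 0‖ < ε)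
    (hpow : ∀ T ∈ V, φ T ^ (m + 2) = φ 0 ^ (m + 2) + (m + 2) * c * T)
    (hmax : ∀ T' ∈ frontier V, ∀ Ti : ℕ → ℂ, (∀ i, Ti i ∈ V) →
      Tendsto Ti atTop (nhds T') → ∀ K : Set ℂ, IsCompact K →
      K ⊆ {z : ℂ | 0 < ‖z‖ ∧ ‖z‖ < ε} → ∀ᶠ i in atTop, φ (Ti i) ∉ K) (θ : ℝ) :
    timeLoop m c (φ 0) θ ∈ V := by
  have hcont : Continuous (timeLoop m c (φ 0)) :=
    continuous_iff_continuousAt.mpr fun θ => (hasDerivAt_timeLoop m c (φ 0) θ).continuousAt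
  have hclosed : IsClosed (timeLoop m c (φ 0) ⁻¹' V) := by
    refine isClosed_of_closure_subset fun t ht => ?_
    by_contra hnot
    have hcl : timeLoop m c (φ 0) t ∈ closure V := hcont.closure_preimage_subset V ht
    obtain ⟨Ti, hTi, hlim⟩ := mem_closure_iff_seq_limit.mp hcl
    obtain ⟨a, ha0, ha⟩ := exists_between hp
    obtain ⟨b, hb, hbε⟩ := exists_between hpε
    have hK : IsCompact (Metric.closedBall (0 : ℂ) b ∩ {z | a ≤ ‖z‖}) :=
      (isCompact_closedBall 0 b).inter_right (isClosed_le continuous_const continuous_norm)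
    have hleave := hmax _ (hV.frontier_eq ▸ ⟨hcl, hnot⟩) Ti hTi hlim _ hK fun z hz =>
      ⟨ha0.trans_le hz.2, (mem_closedBall_zero_iff.mp hz.1).trans_lt hbε⟩
    have hnorm : Tendsto (fun i => ‖φ (Ti i)‖ ^ (m + 2)) atTop (nhds (‖φ 0‖ ^ (m + 2))) := by
      have h := ((hlim.const_mul ((m + 2) * c)).const_add (φ 0 ^ (m + 2))).norm
      rw [pow_add_mul_timeLoop m hc, norm_mul, Complex.norm_exp_ofReal_mul_I, mul_one,
        norm_pow] at h
      exact h.congr fun i => by rw [← hpow _ (hTi i), norm_pow]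
    have hlow := hnorm.eventually_const_lt (pow_lt_pow_left₀ ha ha0.le (by omega))
    have hup := hnorm.eventually_lt_const
      (pow_lt_pow_left₀ hb hp.le (by omega : m + 2 ≠ 0))
    obtain ⟨i, hi, hai, hbi⟩ := (hleave.and (hlow.and hup)).exists
    exact hi ⟨mem_closedBall_zero_iff.mpr (lt_of_pow_lt_pow_left₀ _ (hp.trans hb).le hbi).le,
      (lt_of_pow_lt_pow_left₀ _ (norm_nonneg _) hai).le⟩
  have huniv := IsClopen.eq_univ ⟨hclosed, hV.preimage hcont⟩
    ⟨0, by simpa [timeLoop_zero] using h0⟩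
  exact huniv.ge (Set.mem_univ θ)

/-- for `d ≥ 3` the vector field `X(z) = λ z^{2-d}` on the
punctured disc `U = {0 < |z| < ε}` is not semi-complete: no point of `U`
admits a maximal solution. -/
theorem stmt_3 (d : ℕ) (hd : 3 ≤ d) (lam : ℂ) (hlam : lam ≠ 0)
    (ε : ℝ) (hε : 0 < ε) :
    ∀ p ∈ {z : ℂ | 0 < ‖z‖ ∧ ‖z‖ < ε},
      ¬ ∃ (V : Set ℂ) (φ : ℂ → ℂ),
          IsOpen V ∧ IsConnected V ∧ (0 : ℂ) ∈ V ∧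
          (∀ T ∈ V, φ T ∈ {z : ℂ | 0 < ‖z‖ ∧ ‖z‖ < ε}) ∧
          φ 0 = p ∧
          (∀ T ∈ V, HasDerivAt φ (lam * φ T ^ ((2 : ℤ) - (d : ℤ))) T) ∧
          (∀ T' ∈ frontier V, ∀ Ti : ℕ → ℂ, (∀ i, Ti i ∈ V) →
            Tendsto Ti atTop (nhds T') →
            ∀ K : Set ℂ, IsCompact K →
              K ⊆ {z : ℂ | 0 < ‖z‖ ∧ ‖z‖ < ε} →
              ∀ᶠ i in atTop, φ (Ti i) ∉ K) := by
  rintro p hp ⟨V, φ, hV, hVc, h0, hU, rfl, hφ, hmax⟩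
  obtain ⟨m, rfl⟩ := Nat.exists_eq_add_of_le' hd
  have hne : ∀ T ∈ V, φ T ≠ 0 := fun T hT => norm_pos_iff.mp (hU T hT).1
  have hφ' : ∀ T ∈ V, HasDerivAt φ (lam * (φ T ^ (m + 1))⁻¹) T := fun T hT => by
    have hexp : (2 : ℤ) - ((m + 3 : ℕ) : ℤ) = -((m + 1 : ℕ) : ℤ) := by push_cast; ring
    simpa only [hexp, zpow_neg, zpow_natCast] using hφ T hT
  have hpow : ∀ T ∈ V, φ T ^ (m + 2) = φ 0 ^ (m + 2) + (m + 2) * lam * T := fun T hT =>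
    pow_eq_add_mul_of_hasDerivAt hV hVc.isPreconnected h0 hne hφ' hT
  exact not_forall_timeLoop_mem hlam hne hφ' hpow
    (timeLoop_mem_of_maximal hlam hV h0 hp.1 hp.2 hpow hmax)
end

section
/- Let c > 0 and let (γ_j)_{j∈ℕ} be a sequence of holomorphic automorphisms of the open unit disc 𝔻 such that |γ_j(0)| ≥ (e^{cj}−1)/(e^{cj}+1) for every j ∈ ℕ. Then for every w₀ ∈ 𝔻 the series Σ_{j=0}^{∞} |γ_j'(w₀)|^{1/2} converges. -/
open Metric

/-- A point `b` of the disc has pseudo-hyperbolic distance less than one to any other point `a`. -/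
lemma norm_sub_lt_norm_one_sub_conj_mul {a b : ℂ} (ha : ‖a‖ < 1) (hb : ‖b‖ < 1) :
    ‖b - a‖ < ‖1 - (starRingEnd ℂ) a * b‖ := by
  have h : ‖1 - (starRingEnd ℂ) a * b‖ ^ 2 - ‖b - a‖ ^ 2 = (1 - ‖a‖ ^ 2) * (1 - ‖b‖ ^ 2) := by
    simp only [← Complex.normSq_eq_norm_sq, Complex.normSq_apply, Complex.sub_re, Complex.sub_im,
      Complex.mul_re, Complex.mul_im, Complex.conj_re, Complex.conj_im, Complex.one_re,
      Complex.one_im]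
    ring
  have ha' : 0 < 1 - ‖a‖ ^ 2 := by nlinarith [norm_nonneg a]
  have hb' : 0 < 1 - ‖b‖ ^ 2 := by nlinarith [norm_nonneg b]
  refine lt_of_pow_lt_pow_left₀ 2 (norm_nonneg _) ?_
  linarith [mul_pos ha' hb']

/-- Schwarz–Pick estimate relative to the origin. -/
lemma norm_sub_map_zero_le_norm_mul {f : ℂ → ℂ} (hd : DifferentiableOn ℂ f (ball 0 1))
    (hm : Set.MapsTo f (ball 0 1) (ball 0 1)) {z : ℂ} (hz : z ∈ ball (0 : ℂ) 1) :
    ‖f z - f 0‖ ≤ ‖z‖ * ‖1 - (starRingEnd ℂ) (f 0) * f z‖ := by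
  have hlt : ∀ x ∈ ball (0 : ℂ) 1, ‖f x - f 0‖ < ‖1 - (starRingEnd ℂ) (f 0) * f x‖ := fun x hx =>
    norm_sub_lt_norm_one_sub_conj_mul (mem_ball_zero_iff.1 (hm (mem_ball_self one_pos)))
      (mem_ball_zero_iff.1 (hm hx))
  have hpos : ∀ x ∈ ball (0 : ℂ) 1, 0 < ‖1 - (starRingEnd ℂ) (f 0) * f x‖ := fun x hx =>
    (norm_nonneg _).trans_lt (hlt x hx)
  have hschwarz := Complex.norm_le_norm_of_mapsTo_ball
    (f := fun x => (f x - f 0) / (1 - (starRingEnd ℂ) (f 0) * f x)) (R := 1) (z := z)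
    ((hd.sub_const _).div ((hd.const_mul _).const_sub _) fun x hx => norm_pos_iff.1 (hpos x hx))
    (fun x hx => by
      rw [mem_closedBall_zero_iff, norm_div, div_le_one (hpos x hx)]
      exact (hlt x hx).le)
    (by simp) (mem_ball_zero_iff.1 hz)
  rwa [norm_div, div_le_iff₀ (hpos z hz)] at hschwarz

lemma norm_sub_map_zero_le_div {f : ℂ → ℂ} (hd : DifferentiableOn ℂ f (ball 0 1))
    (hm : Set.MapsTo f (ball 0 1) (ball 0 1)) {z : ℂ} (hz : z ∈ ball (0 : ℂ) 1) :
    ‖f z - f 0‖ ≤ (1 - ‖f 0‖ ^ 2) / (1 - ‖z‖) := by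
  have hz1 : ‖z‖ < 1 := mem_ball_zero_iff.1 hz
  have h0 : ‖f 0‖ < 1 := mem_ball_zero_iff.1 (hm (mem_ball_self one_pos))
  have hsq : 0 ≤ 1 - ‖f 0‖ ^ 2 := by nlinarith [norm_nonneg (f 0)]
  have htri : ‖1 - (starRingEnd ℂ) (f 0) * f z‖ ≤ (1 - ‖f 0‖ ^ 2) + ‖f z - f 0‖ := by
    have hsplit : 1 - (starRingEnd ℂ) (f 0) * f z
        = ((1 - ‖f 0‖ ^ 2 : ℝ) : ℂ) - (starRingEnd ℂ) (f 0) * (f z - f 0) := by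
      push_cast
      rw [← Complex.conj_mul']
      ring
    rw [hsplit]
    refine (norm_sub_le _ _).trans ?_
    rw [Complex.norm_of_nonneg hsq, norm_mul, RCLike.norm_conj]
    gcongr
    exact mul_le_of_le_one_left (norm_nonneg _) h0.le
  rw [le_div_iff₀ (by linarith)]
  nlinarith [norm_sub_map_zero_le_norm_mul hd hm hz, norm_nonneg z,
    mul_le_mul_of_nonneg_left htri (norm_nonneg z)]

/-- The derivative of a holomorphic self-map of the disc at `w` is controlled by the distance of
the image of the origin to the boundary. -/
lemma norm_deriv_le_of_mapsTo_unit_ball {f : ℂ → ℂ} (hd : DifferentiableOn ℂ f (ball 0 1))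
    (hm : Set.MapsTo f (ball 0 1) (ball 0 1)) {w : ℂ} (hw : w ∈ ball (0 : ℂ) 1) :
    ‖deriv f w‖ ≤ (1 - ‖f 0‖ ^ 2) / ((1 - ‖w‖) / 2) ^ 2 := by
  have hw1 : ‖w‖ < 1 := mem_ball_zero_iff.1 hw
  have h0 : ‖f 0‖ < 1 := mem_ball_zero_iff.1 (hm (mem_ball_self one_pos))
  have hsq : 0 ≤ 1 - ‖f 0‖ ^ 2 := by nlinarith [norm_nonneg (f 0)]
  have hR : 0 < (1 - ‖w‖) / 2 := by linarith
  have hnorm : ∀ z ∈ closedBall w ((1 - ‖w‖) / 2), ‖z‖ ≤ 1 - (1 - ‖w‖) / 2 := fun z hz => by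
    have := norm_le_norm_add_norm_sub' z w
    rw [mem_closedBall, dist_eq_norm] at hz
    linarith
  have hsub : closedBall w ((1 - ‖w‖) / 2) ⊆ ball 0 1 := fun z hz =>
    mem_ball_zero_iff.2 (by linarith [hnorm z hz])
  have hcauchy := Complex.norm_deriv_le_of_forall_mem_sphere_norm_le (f := fun z => f z - f 0)
    (C := (1 - ‖f 0‖ ^ 2) / ((1 - ‖w‖) / 2)) hR
    (((hd.sub_const _).mono hsub).diffContOnCl_ball subset_rfl)
    (fun z hz => by
      have hz' := sphere_subset_closedBall hz
      refine (norm_sub_map_zero_le_div hd hm (hsub hz')).trans ?_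
      gcongr
      linarith [hnorm z hz'])
  rwa [deriv_sub_const_fun, div_div, ← sq] at hcauchy

/-- Lemma 7.2 of the paper: if `γ_j` are automorphisms of the
unit disc with `|γ_j(0)| ≥ (e^{cj}-1)/(e^{cj}+1)`, then for every base point
`w₀` of the disc the reduced Poincaré series with exponent `1/2` converges:
`Σ_j |γ_j'(w₀)|^{1/2} < ∞`. -/
theorem stmt_8 (c : ℝ) (hc : 0 < c) (γ : ℕ → ℂ → ℂ)
    (hhol : ∀ j, DifferentiableOn ℂ (γ j) (ball (0 : ℂ) 1))
    (hbij : ∀ j, Set.BijOn (γ j) (ball (0 : ℂ) 1) (ball (0 : ℂ) 1))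
    (hdist : ∀ j : ℕ,
      (Real.exp (c * j) - 1) / (Real.exp (c * j) + 1) ≤ ‖γ j 0‖) :
    ∀ w₀ ∈ ball (0 : ℂ) 1,
      Summable (fun j : ℕ => ‖deriv (γ j) w₀‖ ^ ((1 : ℝ) / 2)) := by
  intro w₀ hw₀
  have hR : 0 < (1 - ‖w₀‖) / 2 := by linarith [mem_ball_zero_iff.1 hw₀]
  have hgeom : Summable fun j : ℕ => 2 / ((1 - ‖w₀‖) / 2) * Real.exp (-(c / 2)) ^ j :=
    (summable_geometric_of_lt_one (Real.exp_pos _).le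
      (Real.exp_lt_one_iff.2 (by linarith))).mul_left _
  refine hgeom.of_nonneg_of_le (fun j => by positivity) fun j => ?_
  rw [← Real.sqrt_eq_rpow]
  refine Real.sqrt_le_iff.2 ⟨by positivity, ?_⟩
  refine (norm_deriv_le_of_mapsTo_unit_ball (hhol j) (hbij j).mapsTo hw₀).trans ?_
  have h0 : ‖γ j 0‖ < 1 := mem_ball_zero_iff.1 ((hbij j).mapsTo (mem_ball_self one_pos))
  have hexp : (Real.exp (-(c / 2)) ^ j) ^ 2 = (Real.exp (c * j))⁻¹ := by
    rw [← Real.exp_nat_mul, ← Real.exp_nat_mul, ← Real.exp_neg]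
    congr 1
    push_cast
    ring
  have hbound : 1 - ‖γ j 0‖ ^ 2 ≤ 4 * (Real.exp (c * j))⁻¹ := by
    have hE := Real.exp_pos (c * j)
    have hgap : 1 - ‖γ j 0‖ ≤ 2 * (Real.exp (c * j))⁻¹ := by
      calc 1 - ‖γ j 0‖ ≤ 1 - (Real.exp (c * j) - 1) / (Real.exp (c * j) + 1) := by
            linarith [hdist j]
        _ = 2 * (Real.exp (c * j) + 1)⁻¹ := by
            field_simp
            ring
        _ ≤ 2 * (Real.exp (c * j))⁻¹ := by
            gcongr
            linarith
    nlinarith [norm_nonneg (γ j 0)]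
  rw [mul_pow, hexp, div_pow 2, div_mul_eq_mul_div]
  gcongr
  linarith
end
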